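/- Let n > k > 0 be integers with exactly one of n, k odd, and let t denote the number of irreducible factors (counted with multiplicity) of X^n + X^k + 1 in F_2[X]. Then t is even in exactly the following cases: (1) n even, k odd, n ≠ 2k, and nk/2 ≡ 0 or 1 (mod 4); (2) n odd, k even, k does not divide 2n, and n ≡ 3 or −3 (mod 8); (3) n odd, k even, k divides 2n, and n ≡ 1 or −1 (mod 8). In all other cases (with exactly one of n, k odd), t is odd. -/

import Mathlib

/-!
Modulo `2` the polynomial `X ^ n + X ^ k + 1` is separable, and the Frobenius permutes its roots
with one cycle per irreducible factor, so the sign of this permutation is `(-1) ^ (n + t)`. The sign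
is read off from the discriminant `D` of the integral lift (Stickelberger): let `δ` be the
Vandermonde determinant of the roots in the ring of integers of the splitting field, so that
`D = δ ^ 2`. The product `S` of the sums `xᵢ + xⱼ` of pairs of roots is a rational integer of the
form `δ + 2 * β` with `β` an algebraic integer, whence `S ^ 2 - D = 4 * (β ^ 2 + β * δ)` and
`D ≡ 1 [ZMOD 8]` exactly when `β ^ 2 + β * δ` vanishes in the residue field. A Frobenius element `σ`
fixes `S` and multiplies `δ` by its sign on the roots, so it fixes `β` or sends it to `β + δ`; since
`δ` reduces to `1`, `β ^ 2 + β * δ` reduces to `σ β + β`, which is `0` in the first case and `1` in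
the second.

The discriminant is computed by Swan from the resultant of `f = X ^ n + a * X ^ k + b` and its
derivative `X ^ (k - 1) * (n * X ^ (n - k) + k * a)`: at a root `x` of the second factor, `f` takes
the value `b + a * (n - k) / n * x ^ k`, and these `x` are multiples of each other by roots of
unity, so that the product of the values is explicit. What remains is to reduce the discriminant
modulo `8`.
-/

open Polynomial

section Permutations

open Finset Equiv.Perm

theorem card_image_eq_card_image_of_iff {α β γ : Type*} [DecidableEq β] [DecidableEq γ]
    {s : Finset α} {f : α → β} {g : α → γ}
    (h : ∀ a ∈ s, ∀ b ∈ s, f a = f b ↔ g a = g b) : #(s.image f) = #(s.image g) := by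
  have hfst : Set.InjOn Prod.fst (s.image fun a ↦ (f a, g a) : Set (β × γ)) := by
    simp only [Set.InjOn, coe_image, Set.forall_mem_image, mem_coe]
    exact fun a ha b hb hab ↦ Prod.ext hab ((h a ha b hb).1 hab)
  have hsnd : Set.InjOn Prod.snd (s.image fun a ↦ (f a, g a) : Set (β × γ)) := by
    simp only [Set.InjOn, coe_image, Set.forall_mem_image, mem_coe]
    exact fun a ha b hb hab ↦ Prod.ext ((h a ha b hb).2 hab) hab
  simpa [image_image, Function.comp_def] using
    (card_image_of_injOn hfst).trans (card_image_of_injOn hsnd).symm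

variable {α β : Type*} [Fintype α] [DecidableEq α] [DecidableEq β] {π : Equiv.Perm α} {p : α → β}

theorem image_cycleOf_support (π : Equiv.Perm α) :
    π.support.image π.cycleOf = π.cycleFactorsFinset := by
  ext c
  simp only [mem_image]
  refine ⟨?_, fun hc ↦ ?_⟩
  · rintro ⟨a, ha, rfl⟩
    exact cycleOf_mem_cycleFactorsFinset_iff.2 ha
  · obtain ⟨a, ha⟩ := (mem_cycleFactorsFinset_iff.1 hc).1.nonempty_support
    exact ⟨a, mem_cycleFactorsFinset_support_le hc ha, (cycle_is_cycleOf ha hc).symm⟩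

theorem card_image_support_of_sameCycle_iff (h : ∀ a b, p a = p b ↔ π.SameCycle a b) :
    #(π.support.image p) = π.cycleType.card := by
  rw [card_image_eq_card_image_of_iff (g := π.cycleOf), image_cycleOf_support, cycleType_def,
    Multiset.card_map, card_val]
  intro a ha b hb
  rw [h, sameCycle_iff_cycleOf_eq_of_mem_support ha hb]

theorem card_image_compl_support_of_sameCycle_iff (h : ∀ a b, p a = p b ↔ π.SameCycle a b) :
    #(π.supportᶜ.image p) = #π.supportᶜ := by
  refine card_image_of_injOn fun a ha b _ hab ↦ ?_
  have hfix : π a = a := by simpa using ha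
  exact ((h a b).1 hab).eq_of_left hfix

theorem card_image_univ_of_sameCycle_iff (h : ∀ a b, p a = p b ↔ π.SameCycle a b) :
    #(univ.image p) = π.cycleType.card + #π.supportᶜ := by
  rw [← union_compl π.support, image_union, card_union_of_disjoint,
    card_image_support_of_sameCycle_iff h, card_image_compl_support_of_sameCycle_iff h]
  simp only [disjoint_left, mem_image, not_exists, not_and]
  rintro _ ⟨a, ha, rfl⟩ b hb hba
  exact mem_compl.1 hb (((h b a).1 hba).mem_support_iff.2 ha)

theorem sign_eq_neg_one_pow_of_sameCycle_iff (h : ∀ a b, p a = p b ↔ π.SameCycle a b) :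
    sign π = (-1) ^ (Fintype.card α + #(univ.image p)) := by
  rw [sign_of_cycleType, sum_cycleType, card_image_univ_of_sameCycle_iff h,
    ← card_add_card_compl π.support]
  rw [show #π.support + #π.supportᶜ + (π.cycleType.card + #π.supportᶜ) =
    #π.support + π.cycleType.card + 2 * #π.supportᶜ by ring, pow_add _ _ (2 * _), pow_mul]
  simp

end Permutations

section Splitting

open UniqueFactorizationMonoid

variable {F K ι : Type*} [Field F] [Field K] [Algebra F K] [Fintype ι] {f : F[X]} {y : ι → K}

theorem aeval_eq_zero_of_map_eq_prod_X_sub_C {A B : Type*} [CommRing A] [CommRing B] [Algebra A B]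
    {f : A[X]} {y : ι → B} (hf : f.map (algebraMap A B) = ∏ i, (X - C (y i))) (i : ι) :
    aeval (y i) f = 0 := by
  rw [aeval_def, ← eval_map, hf, eval_prod]
  exact Finset.prod_eq_zero (Finset.mem_univ i) (by simp)

theorem exists_eq_of_map_eq_prod_X_sub_C {A B : Type*} [CommRing A] [CommRing B] [IsDomain B]
    [Algebra A B] {f : A[X]} {y : ι → B} (hf : f.map (algebraMap A B) = ∏ i, (X - C (y i)))
    {z : B} (hz : aeval z f = 0) : ∃ i, y i = z := by
  rw [aeval_def, ← eval_map, hf, eval_prod, Finset.prod_eq_zero_iff] at hz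
  obtain ⟨i, -, hi⟩ := hz
  exact ⟨i, by simpa [sub_eq_zero, eq_comm] using hi⟩

theorem exists_eq_prod_X_sub_C_of_splits {R : Type*} [CommRing R] [IsDomain R] {f : R[X]}
    (hf : f.Monic) (h : f.Splits) {n : ℕ} (hn : f.natDegree = n) :
    ∃ x : Fin n → R, f = ∏ i, (X - C (x i)) := by
  obtain ⟨l, hl⟩ : ∃ l : List R, (l : Multiset R) = f.roots := Quot.exists_rep f.roots
  obtain rfl : l.length = n := by
    rw [← hn, h.natDegree_eq_card_roots, ← hl, Multiset.coe_card]
  refine ⟨l.get, ?_⟩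
  conv_lhs => rw [h.eq_prod_roots_of_monic hf, ← hl]
  rw [Multiset.map_coe, Multiset.prod_coe, ← List.prod_ofFn]
  congr 1
  apply List.ext_get <;> simp

theorem primeFactors_eq_image_minpoly [DecidableEq F]
    (hf : f.map (algebraMap F K) = ∏ i, (X - C (y i))) :
    primeFactors f = Finset.univ.image fun i ↦ minpoly F (y i) := by
  have hprod : ∏ i, (X - C (y i)) ≠ 0 := Finset.prod_ne_zero_iff.2 fun i _ ↦ X_sub_C_ne_zero _
  have hf0 : f ≠ 0 := by
    rintro rfl
    exact hprod (by rw [← hf, Polynomial.map_zero])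
  ext g
  rw [mem_primeFactors, mem_normalizedFactors_iff' hf0, Finset.mem_image]
  constructor
  · rintro ⟨hg, hnorm, hgf⟩
    have hdvd : g.map (algebraMap F K) ∣ ∏ i, (X - C (y i)) := hf ▸ Polynomial.map_dvd _ hgf
    have hsplits : (g.map (algebraMap F K)).Splits :=
      (Splits.prod fun i _ ↦ Splits.X_sub_C (y i)).of_dvd hprod hdvd
    obtain ⟨z, hz⟩ := hsplits.exists_eval_eq_zero
      (by rw [degree_map]; exact (degree_pos_of_irreducible hg).ne')
    rw [eval_map_algebraMap] at hz
    obtain ⟨i, rfl⟩ :=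
      exists_eq_of_map_eq_prod_X_sub_C hf (aeval_eq_zero_of_dvd_aeval_eq_zero hgf hz)
    exact ⟨i, Finset.mem_univ i, (minpoly.eq_of_irreducible_of_monic hg hz
      (hnorm ▸ monic_normalize hg.ne_zero)).symm⟩
  · rintro ⟨i, -, rfl⟩
    have hroot := aeval_eq_zero_of_map_eq_prod_X_sub_C hf i
    have hint : IsIntegral F (y i) := IsAlgebraic.isIntegral ⟨f, hf0, hroot⟩
    exact ⟨minpoly.irreducible hint, (minpoly.monic hint).normalize_eq_self, minpoly.dvd _ _ hroot⟩

theorem card_factors_eq_card_image_minpoly [DecidableEq F] (hy : Function.Injective y)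
    (hf : f.map (algebraMap F K) = ∏ i, (X - C (y i))) :
    (factors f).card = (Finset.univ.image fun i ↦ minpoly F (y i)).card := by
  have hsep : f.Separable := by
    rw [← separable_map (algebraMap F K), hf]
    exact separable_prod_X_sub_C_iff.2 hy
  rw [← primeFactors_eq_image_minpoly hf, Finset.card_def,
    primeFactors_val_eq_normalizedFactors hsep.squarefree.isRadical, normalizedFactors,
    Multiset.card_map]

end Splitting

section Frobenius

open UniqueFactorizationMonoid

variable {F K ι : Type*} [Field F] [Fintype F] [Field K] [Finite K] [Algebra F K]
  {y : ι → K} {π : Equiv.Perm ι}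

theorem apply_perm_pow_eq_frobenius_pow (hπ : ∀ i, y (π i) = y i ^ Fintype.card F)
    (m : ℕ) (i : ι) :
    y ((π ^ m) i) = (FiniteField.frobeniusAlgEquivOfAlgebraic F K ^ m) (y i) := by
  induction m with
  | zero => simp
  | succ m ih =>
    rw [pow_succ', pow_succ', Equiv.Perm.mul_apply, hπ, ih, AlgEquiv.mul_apply,
      FiniteField.coe_frobeniusAlgEquivOfAlgebraic]

theorem minpoly_eq_iff_sameCycle_of_frobenius [Finite ι] (hy : Function.Injective y)
    (hπ : ∀ i, y (π i) = y i ^ Fintype.card F) (a b : ι) :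
    minpoly F (y a) = minpoly F (y b) ↔ π.SameCycle a b := by
  constructor
  · intro h
    obtain ⟨σ, hσ⟩ := isConjRoot_iff_exists_algEquiv.1 (show IsConjRoot F (y b) (y a) from h.symm)
    obtain ⟨m, rfl⟩ := (FiniteField.bijective_frobeniusAlgEquivOfAlgebraic_pow F K).2 σ
    exact ⟨(m : ℕ), hy <| by rw [zpow_natCast, apply_perm_pow_eq_frobenius_pow hπ, hσ]⟩
  · intro h
    obtain ⟨m, -, rfl⟩ := h.exists_pow_eq'
    rw [apply_perm_pow_eq_frobenius_pow hπ, minpoly.algEquiv_eq]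

theorem sign_eq_neg_one_pow_card_factors_of_frobenius [Fintype ι] [DecidableEq ι] {f : F[X]}
    (hy : Function.Injective y) (hf : f.map (algebraMap F K) = ∏ i, (X - C (y i)))
    (hπ : ∀ i, y (π i) = y i ^ Fintype.card F) :
    Equiv.Perm.sign π = (-1) ^ (Fintype.card ι + (factors f).card) := by
  classical
  rw [card_factors_eq_card_image_minpoly hy hf]
  exact sign_eq_neg_one_pow_of_sameCycle_iff (minpoly_eq_iff_sameCycle_of_frobenius hy hπ)

end Frobenius

section Vandermonde

open Finset Matrix

variable {R S : Type*} [CommRing R] [CommRing S] {n : ℕ}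

/-- The product `∏ (xᵢ + xⱼ)` over the pairs `i < j`. It is congruent modulo `2` to the Vandermonde
determinant `∏ (xⱼ - xᵢ)`, but invariant under permutations of the `xᵢ`. -/
def prodPairSum (x : Fin n → R) : R :=
  ∏ i, ∏ j ∈ Ioi i, (x j + x i)

theorem map_prodPairSum (φ : R →+* S) (x : Fin n → R) :
    φ (prodPairSum x) = prodPairSum (φ ∘ x) := by
  simp [prodPairSum]

theorem map_det_vandermonde (φ : R →+* S) (x : Fin n → R) :
    φ (vandermonde x).det = (vandermonde (φ ∘ x)).det := by
  simp [det_vandermonde]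

theorem prodPairSum_mul_det_vandermonde (x : Fin n → R) :
    prodPairSum x * (vandermonde x).det = (vandermonde (x ^ 2)).det := by
  simp only [prodPairSum, det_vandermonde, ← prod_mul_distrib, Pi.pow_apply, sq_sub_sq]

theorem det_vandermonde_comp_perm (x : Fin n → R) (π : Equiv.Perm (Fin n)) :
    (vandermonde (x ∘ π)).det = (Equiv.Perm.sign π : ℤ) * (vandermonde x).det :=
  det_permute π (vandermonde x)

-- For indeterminates the Vandermonde determinant can be cancelled from
-- `prodPairSum x * det = (vandermonde (x ^ 2)).det`, whose two determinants change sign alike.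
theorem prodPairSum_comp_perm (x : Fin n → R) (π : Equiv.Perm (Fin n)) :
    prodPairSum (x ∘ π) = prodPairSum x := by
  have hX : prodPairSum (MvPolynomial.X ∘ π) =
      prodPairSum (MvPolynomial.X (R := ℤ) (σ := Fin n)) := by
    have hdet : (vandermonde (MvPolynomial.X ∘ π : Fin n → MvPolynomial (Fin n) ℤ)).det ≠ 0 :=
      det_vandermonde_ne_zero_iff.2 ((MvPolynomial.X_injective).comp π.injective)
    refine mul_right_cancel₀ hdet ?_
    rw [prodPairSum_mul_det_vandermonde, det_vandermonde_comp_perm, mul_left_comm,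
      prodPairSum_mul_det_vandermonde, ← det_vandermonde_comp_perm]
    rfl
  simpa [map_prodPairSum, Function.comp_def] using
    congrArg (MvPolynomial.eval₂Hom (Int.castRingHom R) x) hX

theorem exists_prodPairSum_eq_det_vandermonde_add (x : Fin n → R) :
    ∃ β, prodPairSum x = (vandermonde x).det + 2 * β := by
  suffices h : Ideal.Quotient.mk (Ideal.span {2}) (prodPairSum x) =
      Ideal.Quotient.mk (Ideal.span {2}) (vandermonde x).det by
    obtain ⟨β, hβ⟩ := Ideal.mem_span_singleton.1 (Ideal.Quotient.eq.1 h)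
    exact ⟨β, by linear_combination hβ⟩
  rw [map_prodPairSum, map_det_vandermonde, prodPairSum, det_vandermonde]
  refine prod_congr rfl fun i _ ↦ prod_congr rfl fun j _ ↦ ?_
  rw [Function.comp_apply, Function.comp_apply, ← map_add, ← map_sub, Ideal.Quotient.eq,
    Ideal.mem_span_singleton]
  exact ⟨x i, by ring⟩

end Vandermonde

section Discriminant

open Finset Matrix

variable {R S : Type*} [CommRing R] [CommRing S]

theorem discr_eq_resultant_of_monic {f : R[X]} (hf : f.Monic) :
    f.discr = (-1) ^ (f.natDegree * (f.natDegree - 1) / 2) *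
      resultant f f.derivative f.natDegree (f.natDegree - 1) := by
  nontriviality R
  rcases f.natDegree.eq_zero_or_pos with h | h
  · rw [hf.natDegree_eq_zero.1 h, ← C_1, discr_C]
    simp
  · rw [resultant_deriv (natDegree_pos_iff_degree_pos.1 h), hf.leadingCoeff, mul_one, ← mul_assoc,
      ← pow_add, Even.neg_one_pow ⟨_, rfl⟩, one_mul]

theorem discr_map_of_monic {f : R[X]} (hf : f.Monic) (φ : R →+* S) :
    (f.map φ).discr = φ f.discr := by
  nontriviality S
  rw [discr_eq_resultant_of_monic hf, discr_eq_resultant_of_monic (hf.map φ), hf.natDegree_map,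
    derivative_map, resultant_map_map, map_mul, map_pow, map_neg, map_one]

theorem prod_prod_erase_sub {n : ℕ} (x : Fin n → R) :
    ∏ i, ∏ j ∈ univ.erase i, (x i - x j) = (-1) ^ (n * (n - 1) / 2) * (vandermonde x).det ^ 2 := by
  have hsum : ∑ i : Fin n, (n - 1 - (i : ℕ)) = n * (n - 1) / 2 := by
    rw [← sum_range_id, Fin.sum_univ_eq_sum_range (fun i ↦ n - 1 - i)]
    exact sum_range_reflect (fun i ↦ i) n
  simp only [← compl_singleton]
  rw [← prod_prod_Ioi_mul_eq_prod_prod_off_diag fun a b ↦ x b - x a]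
  simp only [det_vandermonde, ← hsum, ← prod_pow, ← prod_pow_eq_pow_sum, ← Fin.card_Ioi,
    ← prod_const, ← prod_mul_distrib]
  exact prod_congr rfl fun i _ ↦ prod_congr rfl fun j _ ↦ by ring

theorem discr_prod_X_sub_C {n : ℕ} (x : Fin n → R) :
    (∏ i, (X - C (x i))).discr = (vandermonde x).det ^ 2 := by
  nontriviality R
  have hmonic : (∏ i, (X - C (x i))).Monic := monic_prod_X_sub_C x univ
  have hdeg : (∏ i, (X - C (x i))).natDegree = n := by simp
  have hres : resultant (∏ i, (X - C (x i))) (∏ i, (X - C (x i))).derivative n (n - 1) =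
      ∏ i, ∏ j ∈ univ.erase i, (x i - x j) := by
    have hle : (∏ i, (X - C (x i))).derivative.natDegree ≤ n - 1 :=
      (natDegree_derivative_le _).trans_eq (by rw [hdeg])
    have hprod := resultant_prod_left univ (fun i ↦ X - C (x i)) _ (n - 1) (by simp) hle
    rw [hdeg] at hprod
    rw [hprod]
    refine prod_congr rfl fun i _ ↦ ?_
    rw [natDegree_X_sub_C, resultant_X_sub_C_left _ _ _ hle]
    exact (Lagrange.eval_nodal_derivative_eval_node_eq (mem_univ i)).trans Lagrange.eval_nodal
  rw [discr_eq_resultant_of_monic hmonic, hdeg, hres, prod_prod_erase_sub, ← mul_assoc, ← pow_add,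
    Even.neg_one_pow ⟨_, rfl⟩, one_mul]

end Discriminant

section Stickelberger

open Matrix Equiv.Perm NumberField UniqueFactorizationMonoid

theorem exists_perm_of_map_eq_prod_X_sub_C {A B ι : Type*} [CommRing A] [CommRing B] [IsDomain B]
    [Algebra A B] [Fintype ι] {f : A[X]} {y : ι → B} (hy : Function.Injective y)
    (hf : f.map (algebraMap A B) = ∏ i, (X - C (y i))) {σ : B →ₐ[A] B}
    (hσ : Function.Injective σ) : ∃ π : Equiv.Perm ι, ∀ i, σ (y i) = y (π i) := by
  have hroot (i : ι) : ∃ j, y j = σ (y i) :=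
    exists_eq_of_map_eq_prod_X_sub_C hf <| by
      rw [aeval_algHom_apply, aeval_eq_zero_of_map_eq_prod_X_sub_C hf, map_zero]
  choose p hp using hroot
  have hp_inj : Function.Injective p := fun a b hab ↦ hy <| hσ <| by rw [← hp, ← hp, hab]
  exact ⟨Equiv.ofBijective p (Finite.injective_iff_bijective.1 hp_inj), fun i ↦ (hp i).symm⟩

theorem map_mul_add_eq_zero_iff_sign_eq_one {A k : Type*} [CommRing A] [IsDomain A] [CommRing k]
    [Nontrivial k] [CharP k 2] (hA : (2 : A) ≠ 0) {σ : A →+* A} {q : A →+* k}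
    (hσ : ∀ a, q (σ a) = q a ^ 2) {n : ℕ} {x : Fin n → A} {π : Equiv.Perm (Fin n)}
    (hπ : ∀ i, σ (x i) = x (π i)) {β : A} (hβ : prodPairSum x = (vandermonde x).det + 2 * β)
    (hδ : q (vandermonde x).det = 1) :
    q (β * (β + (vandermonde x).det)) = 0 ↔ sign π = 1 := by
  set δ := (vandermonde x).det
  have hσx : σ ∘ x = x ∘ π := funext hπ
  have hσδ : σ δ = (sign π : ℤ) * δ := by
    rw [map_det_vandermonde, hσx, det_vandermonde_comp_perm]
  have hσβ : 2 * σ β = (1 - (sign π : ℤ)) * δ + 2 * β := by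
    have h : σ (prodPairSum x) = prodPairSum x := by
      rw [map_prodPairSum, hσx, prodPairSum_comp_perm]
    rw [hβ, map_add, map_mul, map_ofNat, hσδ] at h
    linear_combination h
  rw [map_mul, map_add, hδ, mul_add, mul_one, ← sq, ← hσ]
  rcases Int.units_eq_one_or (sign π) with hsign | hsign
  · have : σ β = β := mul_left_cancel₀ hA <| by simpa [hsign] using hσβ
    simp [this, hsign, CharTwo.add_self_eq_zero]
  · have : σ β = β + δ := mul_left_cancel₀ hA <| by
      rw [hσβ, hsign]
      push_cast
      ring
    have hne : (-1 : ℤˣ) ≠ 1 := by decide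
    simp [this, hδ, hsign, hne, add_right_comm _ (1 : k), CharTwo.add_self_eq_zero]

theorem ringOfIntegers_splits_of_splits {K : Type*} [Field K] {f : (𝓞 K)[X]} (hf : f.Monic)
    (h : (f.map (algebraMap (𝓞 K) K)).Splits) : f.Splits := by
  refine h.of_splits_map_of_injective RingOfIntegers.coe_injective fun a ha ↦ ?_
  have hint : IsIntegral (𝓞 K) a := ⟨f, hf, by simpa [eval_map] using isRoot_of_mem_roots ha⟩
  exact ⟨⟨a, isIntegral_trans a hint⟩, rfl⟩

theorem modEq_one_iff_even_of_sq_sub_eq {s D e : ℤ} (hD : Odd D) (h : s ^ 2 - D = 4 * e) :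
    D ≡ 1 [ZMOD 8] ↔ Even e := by
  have hs : Odd s := by
    rw [← Int.odd_pow' (n := 2) two_ne_zero, show s ^ 2 = D + 2 * (2 * e) by linarith]
    exact hD.add_even (even_two_mul _)
  obtain ⟨c, hc⟩ := Int.eight_dvd_sq_sub_one_of_odd hs
  rw [Int.ModEq, Int.even_iff]
  omega

theorem sign_eq_of_frobenius_lift {A k : Type*} [CommRing A] [Field k] [Finite k] [CharP k 2]
    {σ : A → A} {q : A →+* k} (hσ : ∀ a, q (σ a) = q a ^ 2) {n : ℕ} {F : ℤ[X]} {x : Fin n → A}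
    (hx : F.map (algebraMap ℤ A) = ∏ i, (X - C (x i))) {π : Equiv.Perm (Fin n)}
    (hπ : ∀ i, σ (x i) = x (π i)) (hδ : q (vandermonde x).det ≠ 0) :
    sign π = (-1) ^ (n + (factors (F.map (Int.castRingHom (ZMod 2)))).card) := by
  let _ : Algebra (ZMod 2) k := ZMod.algebra k 2
  have hy : Function.Injective (q ∘ x) := by
    rwa [← det_vandermonde_ne_zero_iff, ← map_det_vandermonde]
  have hF : (F.map (Int.castRingHom (ZMod 2))).map (algebraMap (ZMod 2) k) =
      ∏ i, (X - C ((q ∘ x) i)) := by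
    have h := congrArg (Polynomial.map q) hx
    rw [Polynomial.map_map] at h ⊢
    rw [Subsingleton.elim ((algebraMap (ZMod 2) k).comp _) (q.comp (algebraMap ℤ A)), h]
    simp [Polynomial.map_prod]
  have h := sign_eq_neg_one_pow_card_factors_of_frobenius hy hF (π := π) fun i ↦ by
    rw [Function.comp_apply, ← hπ, hσ, ZMod.card, Function.comp_apply]
  rwa [Fintype.card_fin] at h

variable {K : Type*} [Field K] [NumberField K] [IsGalois ℚ K]

theorem exists_intCast_eq_of_smul_eq {a : 𝓞 K} (ha : ∀ g : K ≃ₐ[ℚ] K, g • a = a) :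
    ∃ m : ℤ, (m : 𝓞 K) = a := by
  obtain ⟨m, hm⟩ := Algebra.IsInvariant.isInvariant (A := ℤ) (G := K ≃ₐ[ℚ] K) a ha
  exact ⟨m, by simpa using hm⟩

variable (K) in
theorem exists_frobenius_lift (p : ℕ) [hp : Fact p.Prime] :
    ∃ (P : Ideal (𝓞 K)) (σ : K ≃ₐ[ℚ] K), P.IsMaximal ∧ Finite (𝓞 K ⧸ P) ∧ CharP (𝓞 K ⧸ P) p ∧
      ∀ a, Ideal.Quotient.mk P (σ • a) = Ideal.Quotient.mk P a ^ p := by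
  have hpmax : (Ideal.span {(p : ℤ)}).IsMaximal :=
    PrincipalIdealRing.isMaximal_of_irreducible (Nat.prime_iff_prime_int.1 hp.out).irreducible
  obtain ⟨P, hP, hPp⟩ := Ideal.exists_ideal_over_maximal_of_isIntegral (S := 𝓞 K)
    (Ideal.span {(p : ℤ)}) (by
      rw [(RingHom.injective_iff_ker_eq_bot _).1 (FaithfulSMul.algebraMap_injective ℤ (𝓞 K))]
      exact bot_le)
  have hpP : (p : 𝓞 K) ∈ P := by
    have : (p : ℤ) ∈ P.comap (algebraMap ℤ (𝓞 K)) := hPp ▸ Ideal.mem_span_singleton_self _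
    simpa using this
  have hP_bot : P ≠ ⊥ := by
    rintro rfl
    exact hp.out.ne_zero (by simpa using hpP)
  have hfin : Finite (𝓞 K ⧸ P) := Ideal.finiteQuotientOfFreeOfNeBot P hP_bot
  have hchar : CharP (𝓞 K ⧸ P) p := by
    refine (CharP.charP_iff_prime_eq_zero hp.out).2 ?_
    rw [← map_natCast (Ideal.Quotient.mk P), Ideal.Quotient.eq_zero_iff_mem.2 hpP]
  have hcard : Nat.card (ℤ ⧸ P.under ℤ) = p := by
    rw [Ideal.under_def, hPp, Nat.card_congr (Int.quotientSpanNatEquivZMod p).toEquiv,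
      Nat.card_zmod]
  obtain ⟨σ, hσ⟩ := IsArithFrobAt.exists_of_isInvariant ℤ (K ≃ₐ[ℚ] K) P
  refine ⟨P, σ, hP, hfin, hchar, fun a ↦ ?_⟩
  have := hσ a
  rwa [hcard, ← Ideal.Quotient.eq, map_pow] at this

theorem exists_intCast_eq_prodPairSum {n : ℕ} {F : ℤ[X]} {x : Fin n → 𝓞 K}
    (hx : Function.Injective x) (hF : F.map (algebraMap ℤ (𝓞 K)) = ∏ i, (X - C (x i))) :
    ∃ s : ℤ, (s : 𝓞 K) = prodPairSum x := by
  refine exists_intCast_eq_of_smul_eq fun g ↦ ?_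
  obtain ⟨π, hπ⟩ := exists_perm_of_map_eq_prod_X_sub_C hx hF
    (σ := MulSemiringAction.toAlgHom ℤ (𝓞 K) g) (MulAction.injective g)
  calc g • prodPairSum x = prodPairSum (MulSemiringAction.toRingHom _ (𝓞 K) g ∘ x) :=
        map_prodPairSum (MulSemiringAction.toRingHom _ (𝓞 K) g) x
    _ = prodPairSum (x ∘ π) := congrArg prodPairSum (funext hπ)
    _ = prodPairSum x := prodPairSum_comp_perm x π

theorem exists_intCast_eq_of_intCast_mul_eq {a : 𝓞 K} {m c : ℤ} (hc : c ≠ 0)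
    (h : (m : 𝓞 K) = c * a) : ∃ e : ℤ, (e : 𝓞 K) = a := by
  refine exists_intCast_eq_of_smul_eq fun g ↦ ?_
  have hg (b : ℤ) : g • (b : 𝓞 K) = b := map_intCast (MulSemiringAction.toRingHom _ (𝓞 K) g) b
  refine mul_left_cancel₀ (Int.cast_ne_zero.2 hc : (c : 𝓞 K) ≠ 0) ?_
  rw [← h, ← hg m, h, smul_mul', hg c]

theorem discr_modEq_one_iff_of_map_eq_prod_X_sub_C {n : ℕ} {F : ℤ[X]} (hF : F.Monic)
    (hodd : Odd F.discr) {x : Fin n → 𝓞 K}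
    (hx : F.map (algebraMap ℤ (𝓞 K)) = ∏ i, (X - C (x i))) :
    F.discr ≡ 1 [ZMOD 8] ↔ Even (n + (factors (F.map (Int.castRingHom (ZMod 2)))).card) := by
  have hD : (F.discr : 𝓞 K) = (vandermonde x).det ^ 2 := by
    rw [← discr_prod_X_sub_C, ← hx, discr_map_of_monic hF, eq_intCast]
  have hx_inj : Function.Injective x := by
    rw [← det_vandermonde_ne_zero_iff, ← pow_ne_zero_iff two_ne_zero, ← hD, Int.cast_ne_zero]
    exact fun h ↦ by simp [h] at hodd
  obtain ⟨β, hβ⟩ := exists_prodPairSum_eq_det_vandermonde_add x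
  obtain ⟨s, hs⟩ := exists_intCast_eq_prodPairSum hx_inj hx
  have hsD : ((s ^ 2 - F.discr : ℤ) : 𝓞 K) = (4 : ℤ) * (β * (β + (vandermonde x).det)) := by
    push_cast
    rw [hs, hD, hβ]
    ring
  obtain ⟨e, he⟩ := exists_intCast_eq_of_intCast_mul_eq (by norm_num) hsD
  obtain ⟨P, σ, hP, hfin, hchar, hσ⟩ := exists_frobenius_lift K 2
  obtain ⟨π, hπ⟩ := exists_perm_of_map_eq_prod_X_sub_C hx_inj hx
    (σ := MulSemiringAction.toAlgHom ℤ (𝓞 K) σ) (MulAction.injective σ)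
  let _ : Field (𝓞 K ⧸ P) := Ideal.Quotient.field P
  have hδ : Ideal.Quotient.mk P (vandermonde x).det = 1 := by
    have h := congrArg (Ideal.Quotient.mk P) hD
    obtain ⟨c, hc⟩ := hodd
    rw [map_pow, map_intCast, hc] at h
    refine CharTwo.sq_injective ?_
    simpa [CharTwo.two_eq_zero] using h.symm
  have hsign := sign_eq_of_frobenius_lift hσ hx hπ (hδ ▸ one_ne_zero)
  calc F.discr ≡ 1 [ZMOD 8] ↔ Even e :=
        modEq_one_iff_even_of_sq_sub_eq hodd (by rw [← he] at hsD; exact_mod_cast hsD)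
    _ ↔ Ideal.Quotient.mk P (β * (β + (vandermonde x).det)) = 0 := by
        rw [← he, map_intCast, CharP.intCast_eq_zero_iff _ 2, even_iff_two_dvd, Nat.cast_two]
    _ ↔ sign π = 1 := map_mul_add_eq_zero_iff_sign_eq_one two_ne_zero
        (σ := MulSemiringAction.toRingHom _ (𝓞 K) σ) hσ hπ hβ hδ
    _ ↔ _ := by
      rw [hsign, neg_one_pow_eq_one_iff_even (by decide)]

theorem stickelberger_discr_modEq_one_iff {F : ℤ[X]} (hF : F.Monic) (hodd : Odd F.discr) :
    F.discr ≡ 1 [ZMOD 8] ↔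
      Even (F.natDegree + (factors (F.map (Int.castRingHom (ZMod 2)))).card) := by
  let E := (F.map (algebraMap ℤ ℚ)).SplittingField
  have : CharZero E := charZero_of_injective_algebraMap (algebraMap ℚ E).injective
  have : NumberField E := ⟨⟩
  -- `SplittingField` and `DivisionRing.toRatAlgebra` give `E` two different `ℚ`-algebra instances.
  have : Normal ℚ E := by
    convert Polynomial.SplittingField.instNormal (F.map (algebraMap ℤ ℚ))
    exact Subsingleton.elim _ _
  have : IsGalois ℚ E := ⟨⟩
  have hsplits : (F.map (algebraMap ℤ (𝓞 E))).Splits := by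
    refine ringOfIntegers_splits_of_splits (hF.map _) ?_
    have := SplittingField.splits (F.map (algebraMap ℤ ℚ))
    rw [Polynomial.map_map] at this ⊢
    rwa [RingHom.ext_int ((algebraMap (𝓞 E) E).comp (algebraMap ℤ (𝓞 E)))]
  obtain ⟨x, hx⟩ := exists_eq_prod_X_sub_C_of_splits (hF.map _) hsplits (hF.natDegree_map _)
  exact discr_modEq_one_iff_of_map_eq_prod_X_sub_C hF hodd hx

end Stickelberger

section Trinomial

theorem prod_range_mul_of_periodic {A : Type*} [CommMonoid A] {f : ℕ → A} {M : ℕ}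
    (hf : Function.Periodic f M) (d : ℕ) :
    ∏ j ∈ Finset.range (d * M), f j = (∏ j ∈ Finset.range M, f j) ^ d := by
  induction d with
  | zero => simp
  | succ d ih =>
    rw [Nat.succ_mul, Finset.prod_range_add, ih, pow_succ]
    congr! 2 with j
    rw [add_comm]
    exact hf.nat_mul d j

theorem prod_add_mul_pow_of_isPrimitiveRoot {L : Type*} [CommRing L] [IsDomain L] {η : L} {M : ℕ}
    (hη : IsPrimitiveRoot η M) (hM : 0 < M) (b w : L) :
    ∏ j ∈ Finset.range M, (b + w * η ^ j) = b ^ M - (-w) ^ M := by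
  have h := congrArg (eval b) (X_pow_sub_C_eq_prod hη hM (α := -w) rfl)
  simp only [eval_sub, eval_pow, eval_X, eval_C, eval_prod] at h
  rw [h]
  exact Finset.prod_congr rfl fun j _ ↦ by ring

variable {R L : Type*} [CommRing R] [Field L] [IsAlgClosed L] [CharZero L] {d K M : ℕ}

theorem prod_roots_X_pow_sub_C_add_mul_pow (hd : 0 < d) (hM : 0 < M) (h : K.Coprime M)
    (u b c : L) :
    ((X ^ (d * M) - C u).roots.map fun x ↦ b + c * x ^ (d * K)).prod =
      (b ^ M - (-c) ^ M * u ^ K) ^ d := by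
  have hdM : 0 < d * M := Nat.mul_pos hd hM
  have : NeZero (d * M) := ⟨hdM.ne'⟩
  obtain ⟨ζ, hζ⟩ := HasEnoughRootsOfUnity.exists_primitiveRoot L (d * M)
  obtain ⟨z, hz⟩ := IsAlgClosed.exists_pow_nat_eq u hdM
  have hη : IsPrimitiveRoot (ζ ^ (d * K)) M := by
    rw [pow_mul]
    exact (hζ.pow hdM rfl).pow_of_coprime K h
  have hperiodic : Function.Periodic (fun j ↦ b + c * z ^ (d * K) * (ζ ^ (d * K)) ^ j) M :=
    fun j ↦ by simp only [pow_add, hη.pow_eq_one, mul_one]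
  calc ((X ^ (d * M) - C u).roots.map fun x ↦ b + c * x ^ (d * K)).prod
      = ((nthRoots (d * M) u).map fun x ↦ b + c * x ^ (d * K)).prod := rfl
    _ = ∏ j ∈ Finset.range (d * M), (b + c * z ^ (d * K) * (ζ ^ (d * K)) ^ j) := by
        rw [hζ.nthRoots_eq hz, Multiset.map_map]
        refine Finset.prod_congr (s₁ := .range _) rfl fun j _ ↦ ?_
        rw [Function.comp_apply, mul_pow, pow_right_comm]
        ring
    _ = (b ^ M - (-(c * z ^ (d * K))) ^ M) ^ d := by
        rw [prod_range_mul_of_periodic hperiodic, prod_add_mul_pow_of_isPrimitiveRoot hη hM]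
    _ = (b ^ M - (-c) ^ M * u ^ K) ^ d := by
        rw [← neg_mul, mul_pow, ← hz, ← pow_mul, ← pow_mul, mul_right_comm]

theorem degree_C_mul_X_pow_add_C_lt {n k : ℕ} (hkn : k < n) (a b : R) :
    (C a * X ^ k + C b).degree < (n : WithBot ℕ) :=
  (degree_add_le _ _).trans_lt <| max_lt
    ((degree_C_mul_X_pow_le k a).trans_lt (Nat.cast_lt.2 hkn))
    (degree_C_le.trans_lt (Nat.cast_pos.2 (Nat.zero_lt_of_lt hkn)))

theorem natDegree_trinomial [Nontrivial R] {n k : ℕ} (hkn : k < n) (a b : R) :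
    (X ^ n + C a * X ^ k + C b).natDegree = n := by
  rw [add_assoc, natDegree_add_eq_left_of_degree_lt, natDegree_X_pow]
  rw [degree_X_pow]
  exact degree_C_mul_X_pow_add_C_lt hkn a b

theorem monic_trinomial {n k : ℕ} (hkn : k < n) (a b : R) :
    (X ^ n + C a * X ^ k + C b).Monic := by
  rw [add_assoc]
  exact monic_X_pow_add (degree_C_mul_X_pow_add_C_lt hkn a b)

theorem resultant_binomial_trinomial (hd : 0 < d) (hM : 0 < M) (h : K.Coprime M)
    {p q r : L} (hp : p ≠ 0) (hpqr : p = q + r) (a b : L) :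
    resultant (C p * X ^ (d * M) + C (q * a)) (X ^ (d * (K + M)) + C a * X ^ (d * K) + C b)
      (d * M) (d * (K + M)) =
      (p ^ (K + M) * b ^ M - (-1) ^ (K + M) * r ^ M * q ^ K * a ^ (K + M)) ^ d := by
  have hg : C p * X ^ (d * M) + C (q * a) = C p * (X ^ (d * M) - C (-(q * a) / p)) := by
    rw [mul_sub, ← C_mul, mul_div_cancel₀ _ hp, C_neg, sub_neg_eq_add]
  have hdeg : (C p * (X ^ (d * M) - C (-(q * a) / p))).natDegree = d * M := by
    rw [natDegree_C_mul hp, natDegree_X_pow_sub_C]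
  have hlead : (C p * (X ^ (d * M) - C (-(q * a) / p))).leadingCoeff = p := by
    rw [leadingCoeff_mul, leadingCoeff_C, (monic_X_pow_sub_C _ (by positivity)).leadingCoeff,
      mul_one]
  have hdegf := (natDegree_trinomial
    (Nat.mul_lt_mul_of_pos_left (show K < K + M by omega) hd) a b).le
  have hres := resultant_eq_prod_eval _ _ _ hdegf
    (IsAlgClosed.splits (C p * (X ^ (d * M) - C (-(q * a) / p))))
  have heval : (X ^ (d * M) - C (-(q * a) / p)).roots.map
      (X ^ (d * (K + M)) + C a * X ^ (d * K) + C b).eval =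
      (X ^ (d * M) - C (-(q * a) / p)).roots.map fun x ↦ b + (r * a / p) * x ^ (d * K) := by
    refine Multiset.map_congr rfl fun x hx ↦ ?_
    have hx : x ^ (d * M) = -(q * a) / p := by simpa [sub_eq_zero] using isRoot_of_mem_roots hx
    simp only [eval_add, eval_pow, eval_X, eval_mul, eval_C, mul_add, pow_add, hx]
    field_simp
    rw [hpqr]
    ring
  rw [hdeg, hlead, roots_C_mul _ hp, heval, prod_roots_X_pow_sub_C_add_mul_pow hd hM h] at hres
  rw [hg, hres, mul_comm d, pow_mul, ← mul_pow]
  congr 1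
  rw [neg_pow, neg_div, neg_pow (_ / p), div_pow, div_pow]
  field_simp
  ring

theorem derivative_trinomial {k : ℕ} (hk : 0 < k) (m : ℕ) (a b : R) :
    derivative (X ^ (k + m) + C a * X ^ k + C b) =
      X ^ (k - 1) * (C ((k + m : ℕ) : R) * X ^ m + C (k * a)) := by
  have hpow : (X : R[X]) ^ (k + m - 1) = X ^ (k - 1) * X ^ m := by
    rw [← pow_add, Nat.sub_add_comm hk]
  simp only [derivative_add, derivative_C_mul, derivative_X_pow, derivative_C, hpow, C_mul]
  ring

theorem resultant_trinomial_derivative {k : ℕ} (hk : 0 < k) (m : ℕ) (a b : R)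
    (hn : ((k + m : ℕ) : R) ≠ 0) :
    resultant (X ^ (k + m) + C a * X ^ k + C b)
      (derivative (X ^ (k + m) + C a * X ^ k + C b)) (k + m) (k + m - 1) =
    b ^ (k - 1) * resultant (C ((k + m : ℕ) : R) * X ^ m + C (k * a))
      (X ^ (k + m) + C a * X ^ k + C b) m (k + m) := by
  set f := X ^ (k + m) + C a * X ^ k + C b with hf
  set g := C ((k + m : ℕ) : R) * X ^ m + C (k * a) with hg
  have hdeg_f : f.natDegree ≤ k + m := by
    rw [hf]
    compute_degree!
  have hdeg_g : g.natDegree = m := by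
    rw [natDegree_add_C, natDegree_C_mul_X_pow _ _ hn]
  have hf0 : f.coeff 0 = b := by
    simp [hf, coeff_X_pow, hk.ne, (Nat.add_pos_left hk m).ne]
  have := nontrivial_of_ne _ _ hn
  have hdeg : (X ^ (k - 1) : R[X]).natDegree + g.natDegree = k + m - 1 := by
    rw [natDegree_X_pow, hdeg_g, Nat.sub_add_comm hk]
  have hsign : Even ((k + m) * (k - 1) + (k + m) * m) := by
    rw [← mul_add, ← Nat.sub_add_comm hk]
    exact Nat.even_mul_pred_self _
  rw [derivative_trinomial hk, ← hg, ← hdeg, resultant_mul_right _ _ _ _ hdeg_f, natDegree_X_pow,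
    hdeg_g, resultant_X_pow_right _ _ _ hdeg_f, hf0, resultant_comm f g, mul_mul_mul_comm,
    ← pow_add, hsign.neg_one_pow, one_mul]

theorem map_discr_trinomial {S : Type*} [CommRing S] {n k : ℕ} (hkn : k < n) (φ : R →+* S)
    (a b : R) :
    φ (X ^ n + C a * X ^ k + C b).discr = (X ^ n + C (φ a) * X ^ k + C (φ b)).discr := by
  rw [← discr_map_of_monic (monic_trinomial hkn a b)]
  simp

theorem discr_trinomial_of_isAlgClosed (hd : 0 < d) (hK : 0 < K) (hM : 0 < M) (h : K.Coprime M)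
    (a b : L) :
    (X ^ (d * (K + M)) + C a * X ^ (d * K) + C b).discr =
      (-1) ^ (d * (K + M) * (d * (K + M) - 1) / 2) * b ^ (d * K - 1) *
        (((d * (K + M) : ℕ) : L) ^ (K + M) * b ^ M -
          (-1) ^ (K + M) * ((d * M : ℕ) : L) ^ M * ((d * K : ℕ) : L) ^ K * a ^ (K + M)) ^ d := by
  have hlt : d * K < d * (K + M) := Nat.mul_lt_mul_of_pos_left (by omega) hd
  have hn : ((d * (K + M) : ℕ) : L) ≠ 0 := Nat.cast_ne_zero.2 (by omega)
  have hsum : ((d * (K + M) : ℕ) : L) = (d * K : ℕ) + (d * M : ℕ) := by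
    rw [mul_add, Nat.cast_add]
  have hres := resultant_trinomial_derivative (Nat.mul_pos hd hK) (d * M) a b
    (by rwa [← mul_add])
  rw [← mul_add, resultant_binomial_trinomial hd hM h hn hsum] at hres
  rw [discr_eq_resultant_of_monic (monic_trinomial hlt a b), natDegree_trinomial hlt, hres,
    ← mul_assoc]

theorem discr_trinomial (hd : 0 < d) (hK : 0 < K) (hM : 0 < M) (h : K.Coprime M) (a b : R) :
    (X ^ (d * (K + M)) + C a * X ^ (d * K) + C b).discr =
      (-1) ^ (d * (K + M) * (d * (K + M) - 1) / 2) * b ^ (d * K - 1) *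
        (((d * (K + M) : ℕ) : R) ^ (K + M) * b ^ M -
          (-1) ^ (K + M) * ((d * M : ℕ) : R) ^ M * ((d * K : ℕ) : R) ^ K * a ^ (K + M)) ^ d := by
  have hlt : d * K < d * (K + M) := Nat.mul_lt_mul_of_pos_left (by omega) hd
  let P := MvPolynomial (Fin 2) ℤ
  let ι : P →+* AlgebraicClosure (FractionRing P) :=
    (algebraMap (FractionRing P) _).comp (algebraMap P _)
  have hι : Function.Injective ι :=
    (algebraMap (FractionRing P) _).injective.comp (FaithfulSMul.algebraMap_injective P _)
  have : CharZero (AlgebraicClosure (FractionRing P)) := charZero_of_injective_ringHom hι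
  let A : P := .X 0
  let B : P := .X 1
  have huniv : (X ^ (d * (K + M)) + C A * X ^ (d * K) + C B).discr =
      (-1) ^ (d * (K + M) * (d * (K + M) - 1) / 2) * B ^ (d * K - 1) *
        (((d * (K + M) : ℕ) : P) ^ (K + M) * B ^ M -
          (-1) ^ (K + M) * ((d * M : ℕ) : P) ^ M * ((d * K : ℕ) : P) ^ K * A ^ (K + M)) ^ d := by
    apply hι
    rw [map_discr_trinomial hlt, discr_trinomial_of_isAlgClosed hd hK hM h]
    simp only [map_mul, map_sub, map_pow, map_neg, map_one, map_natCast]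
  have hspec := congrArg (MvPolynomial.eval₂Hom (Int.castRingHom R) ![a, b]) huniv
  rw [map_discr_trinomial hlt] at hspec
  simpa only [map_mul, map_sub, map_pow, map_neg, map_one, map_natCast, A, B,
    MvPolynomial.coe_eval₂Hom, MvPolynomial.eval₂_X, Matrix.cons_val_zero,
    Matrix.cons_val_one] using hspec

end Trinomial

section ModEight

open UniqueFactorizationMonoid

theorem sq_modEq_one_of_odd {a : ℤ} (ha : Odd a) : a ^ 2 ≡ 1 [ZMOD 8] :=
  (Int.modEq_iff_dvd.2 (Int.eight_dvd_sq_sub_one_of_odd ha)).symm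

theorem pow_modEq_self_of_odd {a : ℤ} (ha : Odd a) {d : ℕ} (hd : Odd d) : a ^ d ≡ a [ZMOD 8] := by
  obtain ⟨c, rfl⟩ := hd
  rw [pow_succ, pow_mul]
  simpa only [one_pow, one_mul] using ((sq_modEq_one_of_odd ha).pow c).mul_right a

theorem mul_four_modEq_of_odd {a : ℤ} (ha : Odd a) : a * 4 ≡ 4 [ZMOD 8] := by
  obtain ⟨c, rfl⟩ := ha
  exact (Int.modEq_iff_dvd.2 ⟨c, by ring⟩).symm

theorem odd_add_ite_four {a : ℤ} (ha : Odd a) (p : Prop) [Decidable p] :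
    Odd (a + if p then 4 else 0) := by
  split_ifs
  · exact ha.add_even (by decide)
  · rwa [add_zero]

theorem mul_pow_self_modEq_ite {d : ℤ} (hd : Odd d) {N : ℕ} (hN : Even N) (hN0 : 0 < N) :
    (d * N) ^ N ≡ if N = 2 then 4 else 0 [ZMOD 8] := by
  obtain ⟨c, rfl⟩ := hN.two_dvd
  split_ifs with h
  · rw [h, Nat.cast_two, mul_pow]
    exact mul_four_modEq_of_odd hd.pow
  · have h8 : (8 : ℤ) ∣ 2 ^ (2 * c) := pow_dvd_pow 2 (show 3 ≤ 2 * c by omega)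
    rw [Int.modEq_zero_iff_dvd, Nat.cast_mul, Nat.cast_two, mul_left_comm, mul_pow]
    exact h8.mul_right _

theorem odd_iff_of_modEq_eight {a b : ℤ} (h : a ≡ b [ZMOD 8]) : Odd a ↔ Odd b := by
  rw [Int.odd_iff, Int.odd_iff, h.of_dvd (by norm_num : (2 : ℤ) ∣ 8)]

theorem exists_eq_mul_coprime {n k : ℕ} (hk : 0 < k) (hkn : k < n) :
    ∃ d K M : ℕ, 0 < d ∧ 0 < K ∧ 0 < M ∧ K.Coprime M ∧ k = d * K ∧ n = d * (K + M) := by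
  obtain ⟨K, M, hcop, hK, hM⟩ := Nat.exists_coprime k (n - k)
  refine ⟨k.gcd (n - k), K, M, Nat.gcd_pos_of_pos_left _ hk, Nat.pos_of_mul_pos_right (hK ▸ hk),
    Nat.pos_of_mul_pos_right (hM ▸ Nat.sub_pos_of_lt hkn), hcop, hK.trans (mul_comm _ _), ?_⟩
  rw [mul_comm, add_mul, ← hK, ← hM, Nat.add_sub_cancel' hkn.le]

theorem discr_X_pow_add_X_pow_add_one_modEq {d K M : ℕ} (hd : Odd d) (hK : 0 < K) (hM : 0 < M)
    (h : K.Coprime M) {T : ℤ} (hT : Odd T)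
    (hmod : ((d * (K + M) : ℕ) : ℤ) ^ (K + M) -
      (-1) ^ (K + M) * ((d * M : ℕ) : ℤ) ^ M * ((d * K : ℕ) : ℤ) ^ K ≡ T [ZMOD 8]) :
    (X ^ (d * (K + M)) + X ^ (d * K) + 1 : ℤ[X]).discr ≡
      (-1) ^ (d * (K + M) * (d * (K + M) - 1) / 2) * T [ZMOD 8] := by
  have h := discr_trinomial hd.pos hK hM h (1 : ℤ) 1
  simp only [C_1, one_mul, one_pow, mul_one] at h
  rw [h]
  exact ((hmod.pow d).trans (pow_modEq_self_of_odd hT hd)).mul_left _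

theorem neg_one_pow_mul_half_eq_of_odd {n i j : ℕ} (hn : Even n) (hi : Odd i) (hj : Odd j) :
    (-1 : ℤ) ^ (n * i / 2) = (-1) ^ (n * j / 2) := by
  obtain ⟨a, rfl⟩ := hn.two_dvd
  rw [mul_assoc, mul_assoc, Nat.mul_div_cancel_left _ two_pos, Nat.mul_div_cancel_left _ two_pos,
    mul_comm a, mul_comm a, pow_mul, pow_mul, hi.neg_one_pow, hj.neg_one_pow]

theorem neg_one_pow_mul_pred_half_of_odd {n : ℕ} (hn : Odd n) :
    (-1 : ℤ) ^ (n * (n - 1) / 2) = (-1) ^ (n / 2) := by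
  obtain ⟨a, ha⟩ := id hn
  have hhalf : n / 2 = a := by omega
  have hpred : n - 1 = 2 * a := by omega
  rw [hhalf, hpred, mul_left_comm, Nat.mul_div_cancel_left _ two_pos, pow_mul, hn.neg_one_pow]

theorem add_eq_two_iff_eq_of_coprime {K M : ℕ} (h : K.Coprime M) : K + M = 2 ↔ K = M := by
  refine ⟨fun hKM ↦ ?_, ?_⟩
  · obtain ⟨rfl, rfl⟩ | ⟨rfl, rfl⟩ | ⟨rfl, rfl⟩ :
      K = 0 ∧ M = 2 ∨ K = 1 ∧ M = 1 ∨ K = 2 ∧ M = 0 := by omega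
    all_goals simp at h ⊢
  · rintro rfl
    rw [(Nat.coprime_self K).1 h]

theorem eq_two_iff_dvd_two_mul_of_coprime {K N : ℕ} (h : K.Coprime N) (hK : Even K) :
    K = 2 ↔ K ∣ 2 * N :=
  ⟨fun hK2 ↦ hK2 ▸ dvd_mul_right _ _,
    fun hdvd ↦ Nat.dvd_antisymm (h.dvd_of_dvd_mul_right hdvd) hK.two_dvd⟩

theorem discr_modEq_of_even_of_odd {n k : ℕ} (hkn : k < n) (hn : Even n) (hk : Odd k) :
    (X ^ n + X ^ k + 1 : ℤ[X]).discr ≡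
      (-1) ^ (n * k / 2) * (1 - n * k + if n = 2 * k then 4 else 0) [ZMOD 8] := by
  obtain ⟨d, K, M, hd, hK, hM, hcop, rfl, rfl⟩ := exists_eq_mul_coprime hk.pos hkn
  obtain ⟨hdo, hKo⟩ := Nat.odd_mul.1 hk
  have hNe : Even (K + M) := (Nat.even_mul.1 hn).resolve_left (Nat.not_even_iff_odd.2 hdo)
  have hMo : Odd M := by grind
  have hiff : K + M = 2 ↔ d * (K + M) = 2 * (d * K) := by
    rw [add_eq_two_iff_eq_of_coprime hcop, mul_left_comm, Nat.mul_right_inj hd.ne', two_mul,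
      Nat.add_left_cancel_iff, eq_comm]
  have hpow : ((d * (K + M) : ℕ) : ℤ) ^ (K + M) ≡
      if d * (K + M) = 2 * (d * K) then 4 else 0 [ZMOD 8] := by
    simpa only [hiff, Nat.cast_mul] using
      mul_pow_self_modEq_ite ((Int.odd_coe_nat d).2 hdo) hNe (by omega)
  have hprod : ((d * M : ℕ) : ℤ) ^ M * ((d * K : ℕ) : ℤ) ^ K ≡
      (d * (K + M) : ℕ) * (d * K : ℕ) - 1 [ZMOD 8] := by
    have hmk := (pow_modEq_self_of_odd ((Int.odd_coe_nat _).2 (hdo.mul hMo)) hMo).mul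
      (pow_modEq_self_of_odd ((Int.odd_coe_nat _).2 hk) hKo)
    refine hmk.trans ?_
    convert (sq_modEq_one_of_odd ((Int.odd_coe_nat _).2 hk)).sub_left
      (((d * (K + M) : ℕ) : ℤ) * (d * K : ℕ)) using 1
    push_cast
    ring
  rw [neg_one_pow_mul_half_eq_of_odd hn hk
    (Nat.Even.sub_odd (by omega) hn odd_one : Odd (d * (K + M) - 1))]
  refine discr_X_pow_add_X_pow_add_one_modEq hdo hK hM hcop ?_ ?_
  · have hnk : Even (((d * (K + M) : ℕ) : ℤ) * (d * K : ℕ)) :=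
      ((Int.even_coe_nat _).2 hn).mul_right _
    exact odd_add_ite_four (odd_one.sub_even hnk) _
  · rw [hNe.neg_one_pow, one_mul]
    convert hpow.sub hprod using 1
    ring

theorem discr_modEq_of_odd_of_even {n k : ℕ} (hk0 : 0 < k) (hkn : k < n) (hn : Odd n)
    (hk : Even k) :
    (X ^ n + X ^ k + 1 : ℤ[X]).discr ≡
      (-1) ^ (n / 2) * (n + if k ∣ 2 * n then 4 else 0) [ZMOD 8] := by
  obtain ⟨d, K, M, hd, hK, hM, hcop, rfl, rfl⟩ := exists_eq_mul_coprime hk0 hkn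
  obtain ⟨hdo, hNo⟩ := Nat.odd_mul.1 hn
  have hKe : Even K := (Nat.even_mul.1 hk).resolve_left (Nat.not_even_iff_odd.2 hdo)
  have hMo : Odd M := by grind
  have hiff : K = 2 ↔ d * K ∣ 2 * (d * (K + M)) := by
    rw [mul_left_comm, Nat.mul_dvd_mul_iff_left hd]
    exact eq_two_iff_dvd_two_mul_of_coprime (Nat.coprime_self_add_right.2 hcop) hKe
  have hpow : ((d * (K + M) : ℕ) : ℤ) ^ (K + M) ≡ (d * (K + M) : ℕ) [ZMOD 8] :=
    pow_modEq_self_of_odd ((Int.odd_coe_nat _).2 hn) hNo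
  have hprod : ((d * M : ℕ) : ℤ) ^ M * ((d * K : ℕ) : ℤ) ^ K ≡
      if d * K ∣ 2 * (d * (K + M)) then 4 else 0 [ZMOD 8] := by
    have hkK := mul_pow_self_modEq_ite ((Int.odd_coe_nat d).2 hdo) hKe hK
    simp only [hiff] at hkK
    rw [Nat.cast_mul d K]
    refine (hkK.mul_left _).trans ?_
    split_ifs
    · exact mul_four_modEq_of_odd ((Int.odd_coe_nat _).2 (hdo.mul hMo)).pow
    · rw [mul_zero]
  rw [← neg_one_pow_mul_pred_half_of_odd hn]
  refine discr_X_pow_add_X_pow_add_one_modEq hdo hK hM hcop ?_ ?_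
  · exact odd_add_ite_four ((Int.odd_coe_nat _).2 hn) _
  · rw [hNo.neg_one_pow, neg_one_mul, neg_mul, sub_neg_eq_add]
    exact hpow.add hprod

theorem discr_modEq_one_iff_even_add_card_factors {n k : ℕ} (hkn : k < n)
    (hodd : Odd (X ^ n + X ^ k + 1 : ℤ[X]).discr) :
    (X ^ n + X ^ k + 1 : ℤ[X]).discr ≡ 1 [ZMOD 8] ↔
      Even (n + (factors (X ^ n + X ^ k + 1 : (ZMod 2)[X])).card) := by
  have hmonic := monic_trinomial hkn (1 : ℤ) 1
  have hdeg := natDegree_trinomial hkn (1 : ℤ) 1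
  simp only [C_1, one_mul] at hmonic hdeg
  have h := stickelberger_discr_modEq_one_iff hmonic hodd
  simpa [hdeg] using h

theorem even_card_factors_iff_of_even_of_odd {n k : ℕ} (hkn : k < n) (hn : Even n) (hk : Odd k) :
    Even (factors (X ^ n + X ^ k + 1 : (ZMod 2)[X])).card ↔
      n ≠ 2 * k ∧ (n * k / 2 % 4 = 0 ∨ n * k / 2 % 4 = 1) := by
  have hmod := discr_modEq_of_even_of_odd hkn hn hk
  obtain ⟨w, hw⟩ : ∃ w, n * k = 2 * w := (hn.mul_right k).two_dvd
  have hwk : n = 2 * k → w % 8 = 1 := by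
    rintro rfl
    have hk2 : (k : ℤ) ^ 2 % 8 = 1 := sq_modEq_one_of_odd ((Int.odd_coe_nat k).2 hk)
    have : w = k ^ 2 := by nlinarith
    zify
    rw [this]
    exact_mod_cast hk2
  rw [← Nat.cast_mul, hw, Nat.mul_div_cancel_left _ two_pos] at hmod
  have hodd : Odd (X ^ n + X ^ k + 1 : ℤ[X]).discr := by
    rw [odd_iff_of_modEq_eight hmod]
    refine (odd_neg_one.pow).mul (odd_add_ite_four (odd_one.sub_even ?_) _)
    simp
  rw [hw, Nat.mul_div_cancel_left _ two_pos]
  have hiff := discr_modEq_one_iff_even_add_card_factors hkn hodd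
  rw [Nat.even_add, iff_true_left hn] at hiff
  rw [← hiff, Int.ModEq, hmod]
  rcases Nat.even_or_odd w with h | h <;> rw [h.neg_one_pow] <;> grind

theorem even_card_factors_iff_of_odd_of_even {n k : ℕ} (hk0 : 0 < k) (hkn : k < n) (hn : Odd n)
    (hk : Even k) :
    Even (factors (X ^ n + X ^ k + 1 : (ZMod 2)[X])).card ↔
      ¬ k ∣ 2 * n ∧ (n % 8 = 3 ∨ n % 8 = 5) ∨ k ∣ 2 * n ∧ (n % 8 = 1 ∨ n % 8 = 7) := by
  have hmod := discr_modEq_of_odd_of_even hk0 hkn hn hk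
  have hodd : Odd (X ^ n + X ^ k + 1 : ℤ[X]).discr := by
    rw [odd_iff_of_modEq_eight hmod]
    exact (odd_neg_one.pow).mul (odd_add_ite_four ((Int.odd_coe_nat n).2 hn) _)
  have hiff := discr_modEq_one_iff_even_add_card_factors hkn hodd
  rw [Nat.even_add, iff_false_left (Nat.not_even_iff_odd.2 hn)] at hiff
  rw [← not_iff_not, ← hiff, Int.ModEq, hmod]
  rcases Nat.even_or_odd (n / 2) with h | h <;> rw [h.neg_one_pow] <;> grind

end ModEight

theorem swan_trinomial (n k : ℕ) (hk : 0 < k) (hkn : k < n)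
    (hparity : (Odd n ∧ Even k) ∨ (Even n ∧ Odd k)) :
    Even (Multiset.card (UniqueFactorizationMonoid.factors
        (X ^ n + X ^ k + 1 : Polynomial (ZMod 2)))) ↔
      ((Even n ∧ Odd k ∧ n ≠ 2 * k ∧ (n * k / 2 % 4 = 0 ∨ n * k / 2 % 4 = 1)) ∨
       (Odd n ∧ Even k ∧ ¬ (k ∣ 2 * n) ∧ (n % 8 = 3 ∨ n % 8 = 5)) ∨
       (Odd n ∧ Even k ∧ k ∣ 2 * n ∧ (n % 8 = 1 ∨ n % 8 = 7))) := by
  rcases hparity with ⟨hn, hk'⟩ | ⟨hn, hk'⟩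
  · rw [even_card_factors_iff_of_odd_of_even hk hkn hn hk']
    simp [hn, hk']
  · rw [even_card_factors_iff_of_even_of_odd hkn hn hk']
    simp [hn, hk']
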